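/- Adaptive union bound (combinatorial core of Proposition 1): let d : ℕ, and for every list h of naturals with |h| < d let k(h) be a positive natural, δ(h) a nonnegative real, and Bad(h) ⊆ Fin (k h) a set with card (Bad h) ≤ δ(h)·k(h). Assume that along every full history (r_1,…,r_d) with r_{i+1} ∈ Fin (k (r_1,…,r_i)) the sum δ(∅) + δ(r_1) + … + δ(r_1,…,r_{d-1}) is at most ε. If each r_{i+1} is chosen uniformly at random from Fin (k (r_1,…,r_i)), independently given the past, then the probability that r_{i+1} ∈ Bad(r_1,…,r_i) for some i < d is at most ε. -/

import Mathlib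

/-! Conditioned on a valid history `h` with `n` steps to go, the probability of a future bad
choice is at most `ε` minus the capital `∑ i < |h|, δ (h.take i)` already spent; the theorem is the
case of the empty history. This is proved by induction on `n`. At `h` the bad choices contribute
at most `δ h`, and every extension `h ++ [r]` leaves the same remaining capital
`ε - ∑ i < |h|, δ (h.take i) - δ h`, which bounds the conditional probability after the choice `r`.
That capital is nonnegative because it bounds a probability, so it may also be charged on the bad
choices. -/

/-- A full history of the random process is valid if each entry was chosen among the
`k`-many options available given the preceding entries. -/
def ValidHistory (k : List ℕ → ℕ) (h : List ℕ) : Prop :=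
  ∀ i < h.length, h.getD i 0 < k (h.take i)

/-- `hitProb k Bad d h`: the probability that, continuing from history `h` for `d`
more uniformly random steps (the next entry being uniform on `Fin (k h')` at each
intermediate history `h'`), some step lands in the bad set of its history. -/
noncomputable def hitProb (k : List ℕ → ℕ) (Bad : (h : List ℕ) → Finset (Fin (k h))) :
    ℕ → List ℕ → ℝ
  | 0, _ => 0
  | d + 1, h =>
      (∑ r : Fin (k h), if r ∈ Bad h then 1 else hitProb k Bad d (h ++ [(r : ℕ)])) / (k h)

lemma hitProb_nonneg (k : List ℕ → ℕ) (Bad : (h : List ℕ) → Finset (Fin (k h))) (n : ℕ) :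
    ∀ h : List ℕ, 0 ≤ hitProb k Bad n h := by
  induction n with
  | zero => intro h; simp [hitProb]
  | succ n ih =>
    intro h
    rw [hitProb]
    refine div_nonneg (Finset.sum_nonneg fun r _ => ?_) (Nat.cast_nonneg _)
    split_ifs
    · exact zero_le_one
    · exact ih _

lemma ValidHistory.append {k : List ℕ → ℕ} {h : List ℕ} (hv : ValidHistory k h) {r : ℕ}
    (hr : r < k h) : ValidHistory k (h ++ [r]) := by
  intro i hi
  rw [List.length_append, List.length_singleton] at hi
  rcases Nat.lt_succ_iff_lt_or_eq.mp hi with hlt | rfl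
  · rw [List.getD_append _ _ _ _ hlt, List.take_append_of_le_length hlt.le]
    exact hv i hlt
  · simpa using hr

lemma sum_take_append (δ : List ℕ → ℝ) (h : List ℕ) (r : ℕ) :
    ∑ i ∈ Finset.range (h ++ [r]).length, δ ((h ++ [r]).take i)
      = ∑ i ∈ Finset.range h.length, δ (h.take i) + δ h := by
  rw [List.length_append, List.length_singleton, Finset.sum_range_succ]
  congr 1
  · refine Finset.sum_congr rfl fun i hi => ?_
    rw [List.take_append_of_le_length (Finset.mem_range.mp hi).le]
  · simp

/-- The union bound conditioned on a valid history `h`: the capital spent along `h` plus the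
probability of a bad choice in the remaining `n` steps is at most `ε`. -/
lemma sum_add_hitProb_le (d : ℕ) (k : List ℕ → ℕ) (δ : List ℕ → ℝ) (ε : ℝ)
    (Bad : (h : List ℕ) → Finset (Fin (k h)))
    (hk : ∀ h : List ℕ, h.length < d → 0 < k h)
    (hBad : ∀ h : List ℕ, h.length < d → ((Bad h).card : ℝ) ≤ δ h * k h)
    (hsum : ∀ h : List ℕ, h.length = d → ValidHistory k h →
      ∑ i ∈ Finset.range d, δ (h.take i) ≤ ε) (n : ℕ) :
    ∀ h : List ℕ, h.length + n = d → ValidHistory k h →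
      ∑ i ∈ Finset.range h.length, δ (h.take i) + hitProb k Bad n h ≤ ε := by
  induction n with
  | zero =>
    intro h hd hv
    have hlen : h.length = d := hd
    simpa [hitProb, hlen] using hsum h hlen hv
  | succ n ih =>
    intro h hd hv
    have hlt : h.length < d := by omega
    have hkpos : (0 : ℝ) < k h := Nat.cast_pos.mpr (hk h hlt)
    set S := ∑ i ∈ Finset.range h.length, δ (h.take i)
    have hstep : ∀ r : Fin (k h), hitProb k Bad n (h ++ [(r : ℕ)]) ≤ ε - S - δ h := by
      intro r
      have h1 := ih (h ++ [(r : ℕ)]) (by simp; omega) (hv.append r.isLt)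
      rw [sum_take_append] at h1
      linarith
    have hC : 0 ≤ ε - S - δ h :=
      (hitProb_nonneg k Bad n _).trans (hstep ⟨0, hk h hlt⟩)
    have hterms : (∑ r : Fin (k h), if r ∈ Bad h then 1 else hitProb k Bad n (h ++ [(r : ℕ)]))
        ≤ ∑ r : Fin (k h), ((if r ∈ Bad h then (1 : ℝ) else 0) + (ε - S - δ h)) := by
      refine Finset.sum_le_sum fun r _ => ?_
      split_ifs
      · linarith
      · linarith [hstep r]
    have htotal : ∑ r : Fin (k h), ((if r ∈ Bad h then (1 : ℝ) else 0) + (ε - S - δ h))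
        = (Bad h).card + k h * (ε - S - δ h) := by
      simp [Finset.sum_add_distrib]
      ring
    have hprob : hitProb k Bad (n + 1) h ≤ ε - S := by
      rw [hitProb, div_le_iff₀ hkpos]
      linarith [hBad h hlt]
    linarith

/-- adaptive union bound: if at every history `h` of length `< d` the
bad set has at most a `δ h` fraction of the `k h` options, and along every valid full
history the thresholds `δ` sum to at most `ε`, then the probability that the process
ever makes a bad choice is at most `ε`. -/
theorem adaptive_union_bound (d : ℕ) (k : List ℕ → ℕ) (δ : List ℕ → ℝ) (ε : ℝ)
    (Bad : (h : List ℕ) → Finset (Fin (k h)))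
    (hk : ∀ h : List ℕ, h.length < d → 0 < k h)
    (hδ : ∀ h : List ℕ, h.length < d → 0 ≤ δ h)
    (hBad : ∀ h : List ℕ, h.length < d → ((Bad h).card : ℝ) ≤ δ h * k h)
    (hsum : ∀ h : List ℕ, h.length = d → ValidHistory k h →
      ∑ i ∈ Finset.range d, δ (h.take i) ≤ ε) :
    hitProb k Bad d [] ≤ ε := by
  simpa using sum_add_hitProb_le d k δ ε Bad hk hBad hsum d [] (by simp)
    (fun i hi => absurd hi (Nat.not_lt_zero i))
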